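/- For the binary quintic in Sylvester canonical form F(x₁,x₂) = u·x₁⁵ + v·x₂⁵ − w·(x₁+x₂)⁵ with u, v, w ∈ ℂ, one has H(F) = u⁵v⁵w⁵·(u − v)(u − w)(v − w). -/

import Mathlib

/-!
On the Sylvester form `F = u x⁵ + v y⁵ − w z⁵` with `z = x + y`, every covariant is a short
combination of products of the three linear forms, because `(l⁵, m⁵)₄ = [l m]⁴ l m`,
`(l⁵, m n)₂ = [l m][l n] l³`, and the brackets are `[x y] = [x z] = 1`, `[y z] = −1`. This gives

* `C₁ = 2 (uv xy − uw xz − vw yz)`,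
* `C₂ = −2uvw (x³ + y³ − z³) = 6uvw xyz`,
* `C₃ = −8 (uvw)² (x² + xy + y²)`,
* `C₄ = 4uvw (v (w − u) x + u (w − v) y)`,

and the two remaining linear covariants `(C₄, C₃)₁`, `(C₁, C₄)₁` and their bracket are read off
from these. Each closed form is checked by differentiating the previous ones.
-/

noncomputable section

open MvPolynomial

abbrev P2 := MvPolynomial (Fin 2) ℂ

/-- The bracket `(bc) = b₁c₂ − b₂c₁` of two points of `ℂ²`. -/
def br (b c : Fin 2 → ℂ) : ℂ := b 0 * c 1 - b 1 * c 0

/-- The linear binary form `(xλ) = x₁λ₂ − x₂λ₁` with homogeneous root `λ`. -/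
def lin (l : Fin 2 → ℂ) : P2 := C (l 1) * X 0 - C (l 0) * X 1

/-- The binary quintic with homogeneous roots `λ₁,…,λ₅`. -/
def quinticOf (l : Fin 5 → Fin 2 → ℂ) : P2 := ∏ i, lin (l i)

/-- The binary quartic obtained from the quintic with roots `λ₁,…,λ₅` by
omitting the `i`-th factor. -/
def quarticOmit (l : Fin 5 → Fin 2 → ℂ) (i : Fin 5) : P2 :=
  ∏ j ∈ Finset.univ.erase i, lin (l j)

/-- The binary quartic with homogeneous roots `ξ₁,…,ξ₄`. -/
def quarticOf (l : Fin 4 → Fin 2 → ℂ) : P2 := ∏ i, lin (l i)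

/-- The coefficient of `x₁^i x₂^j` in a binary form. -/
def mcoeff (i j : ℕ) (F : P2) : ℂ :=
  MvPolynomial.coeff (Finsupp.single 0 i + Finsupp.single 1 j) F

/-- The invariant `S = q₀q₄ − 4q₁q₃ + 3q₂²` of a binary quartic
`Q = q₀x₁⁴ + 4q₁x₁³x₂ + 6q₂x₁²x₂² + 4q₃x₁x₂³ + q₄x₂⁴`. -/
def Sq (Q : P2) : ℂ :=
  mcoeff 4 0 Q * mcoeff 0 4 Q - 4 * (mcoeff 3 1 Q / 4) * (mcoeff 1 3 Q / 4)
    + 3 * (mcoeff 2 2 Q / 6) ^ 2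

/-- The invariant `T = q₀q₂q₄ + 2q₁q₂q₃ − q₂³ − q₀q₃² − q₁²q₄` of a binary quartic. -/
def Tq (Q : P2) : ℂ :=
  mcoeff 4 0 Q * (mcoeff 2 2 Q / 6) * mcoeff 0 4 Q
    + 2 * (mcoeff 3 1 Q / 4) * (mcoeff 2 2 Q / 6) * (mcoeff 1 3 Q / 4)
    - (mcoeff 2 2 Q / 6) ^ 3 - mcoeff 4 0 Q * (mcoeff 1 3 Q / 4) ^ 2
    - (mcoeff 3 1 Q / 4) ^ 2 * mcoeff 0 4 Q

/-- The quintic `R̄ = ∏ᵢ ((S(Qᵢ)³ − 27T(Qᵢ)²)z − S(Qᵢ)³)` in the variable `z`. -/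
def Rbar (l : Fin 5 → Fin 2 → ℂ) : Polynomial ℂ :=
  ∏ i : Fin 5,
    (Polynomial.C (Sq (quarticOmit l i) ^ 3 - 27 * Tq (quarticOmit l i) ^ 2) * Polynomial.X
      - Polynomial.C (Sq (quarticOmit l i) ^ 3))

/-- The invariant `Bᵢ`, defined by `R̄ = Σᵢ Bᵢ z^(5−i)`. -/
def Binv (l : Fin 5 → Fin 2 → ℂ) (i : ℕ) : ℂ := (Rbar l).coeff (5 - i)

/-- Partial derivative of a binary form. -/
def pd (i : Fin 2) (F : P2) : P2 := MvPolynomial.pderiv i F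

/-- The `k`-th transvectant of binary forms `F`, `G` of orders `p`, `q`. -/
def transv (p q k : ℕ) (F G : P2) : P2 :=
  C ((Nat.factorial (p - k) * Nat.factorial (q - k) : ℂ)
      / (Nat.factorial p * Nat.factorial q)) *
  ∑ i ∈ Finset.range (k + 1),
    C ((-1 : ℂ) ^ i * (Nat.choose k i : ℂ)) *
      ((pd 1)^[i] ((pd 0)^[k - i] F)) * ((pd 0)^[i] ((pd 1)^[k - i] G))

/-- The covariant `C₁ = (F,F)₄` of a binary quintic. -/
def cov1 (F : P2) : P2 := transv 5 5 4 F F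
/-- The covariant `C₂ = (F,C₁)₂` of a binary quintic. -/
def cov2 (F : P2) : P2 := transv 5 2 2 F (cov1 F)
/-- The covariant `C₃ = (C₂,C₂)₂` of a binary quintic. -/
def cov3 (F : P2) : P2 := transv 3 3 2 (cov2 F) (cov2 F)
/-- The covariant `C₄ = (C₂,C₁)₂` of a binary quintic. -/
def cov4 (F : P2) : P2 := transv 3 2 2 (cov2 F) (cov1 F)

/-- The degree `4` invariant `J = −½(C₁,C₁)₂` of a binary quintic. -/
def Jinv (F : P2) : ℂ := -(1/2) * constantCoeff (transv 2 2 2 (cov1 F) (cov1 F))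
/-- The degree `8` invariant `K = ⅛(C₁,C₃)₂` of a binary quintic. -/
def Kinv (F : P2) : ℂ := (1/8) * constantCoeff (transv 2 2 2 (cov1 F) (cov3 F))
/-- The degree `12` invariant `L = (1/96)(C₃,C₃)₂` of a binary quintic. -/
def Linv (F : P2) : ℂ := (1/96) * constantCoeff (transv 2 2 2 (cov3 F) (cov3 F))
/-- The degree `18` invariant `H = −(1/384)((C₄,C₃)₁,(C₁,C₄)₁)₁` of a binary quintic. -/
def Hinv (F : P2) : ℂ :=
  -(1/384) *
    constantCoeff (transv 1 1 1 (transv 1 2 1 (cov4 F) (cov3 F)) (transv 2 1 1 (cov1 F) (cov4 F)))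

/-- The coefficients `a₀,…,a₅` of a binary quintic `F = Σ aᵢ x₁^(5−i) x₂^i`. -/
def qcoeffs (F : P2) : Fin 6 → ℂ := fun i => mcoeff (5 - (i : ℕ)) (i : ℕ) F

/-- The binary quintic with coefficients `a₀,…,a₅`. -/
def formOf (a : Fin 6 → ℂ) : P2 := ∑ i : Fin 6, C (a i) * X 0 ^ (5 - (i : ℕ)) * X 1 ^ (i : ℕ)

/-- The `GL₂(ℂ)` action on binary forms, `(gF)(x) = F(g⁻¹x)`. -/
def act (g : Matrix.GeneralLinearGroup (Fin 2) ℂ) (F : P2) : P2 :=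
  aeval (fun i => ∑ j,
    C (((g⁻¹ : Matrix.GeneralLinearGroup (Fin 2) ℂ) : Matrix (Fin 2) (Fin 2) ℂ) i j) * X j) F

/-- The `SL₂(ℂ)` action on binary forms, `(gF)(x) = F(g⁻¹x)`. -/
def actSL (g : Matrix.SpecialLinearGroup (Fin 2) ℂ) (F : P2) : P2 :=
  aeval (fun i => ∑ j,
    C (((g⁻¹ : Matrix.SpecialLinearGroup (Fin 2) ℂ) : Matrix (Fin 2) (Fin 2) ℂ) i j) * X j) F

/-- `P` (a polynomial in the coefficients `a₀,…,a₅` of a binary quintic) is an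
`SL₂(ℂ)`-invariant: `P(gF) = P(F)` for all `g ∈ SL₂(ℂ)`. -/
def IsInvariantPoly (P : MvPolynomial (Fin 6) ℂ) : Prop :=
  ∀ (g : Matrix.SpecialLinearGroup (Fin 2) ℂ) (a : Fin 6 → ℂ),
    MvPolynomial.eval (qcoeffs (actSL g (formOf a))) P = MvPolynomial.eval a P

/-- The discriminant `∏_{i<j} (λᵢλⱼ)²` of a binary quintic with roots `λ₁,…,λ₅`. -/
def disc5 (l : Fin 5 → Fin 2 → ℂ) : ℂ := ∏ i, ∏ j ∈ Finset.Ioi i, br (l i) (l j) ^ 2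

/-- The discriminant `∏_{i<j} (ξᵢξⱼ)²` of a binary quartic with roots `ξ₁,…,ξ₄`. -/
def disc4 (l : Fin 4 → Fin 2 → ℂ) : ℂ := ∏ i, ∏ j ∈ Finset.Ioi i, br (l i) (l j) ^ 2

/-- The Sylvester canonical form `u x₁⁵ + v x₂⁵ − w (x₁+x₂)⁵`. -/
def sylvester (u v w : ℂ) : P2 := C u * X 0 ^ 5 + C v * X 1 ^ 5 - C w * (X 0 + X 1) ^ 5

/-- The submodule of `SL₂(ℂ)`-invariant polynomials in the coefficients of the
binary quintic. -/
def invariantSubmodule : Submodule ℂ (MvPolynomial (Fin 6) ℂ) :=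
  ⨅ (g : Matrix.SpecialLinearGroup (Fin 2) ℂ), ⨅ (a : Fin 6 → ℂ),
    LinearMap.ker
      ((aeval (R := ℂ) (qcoeffs (actSL g (formOf a)))).toLinearMap
        - (aeval (R := ℂ) a).toLinearMap)


lemma pd_add (i : Fin 2) (F G : P2) : pd i (F + G) = pd i F + pd i G := map_add _ _ _

lemma pd_sub (i : Fin 2) (F G : P2) : pd i (F - G) = pd i F - pd i G := map_sub _ _ _

lemma pd_neg (i : Fin 2) (F : P2) : pd i (-F) = -pd i F := map_neg _ _

lemma pd_mul (i : Fin 2) (F G : P2) : pd i (F * G) = pd i F * G + F * pd i G := by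
  simp only [pd, pderiv_mul]

lemma pd_pow (i : Fin 2) (F : P2) (n : ℕ) :
    pd i (F ^ (n + 1)) = C ((n : ℂ) + 1) * F ^ n * pd i F := by
  simp only [pd, pderiv_pow]
  simp

lemma pd_C (i : Fin 2) (a : ℂ) : pd i (C a) = 0 := pderiv_C

lemma pd_one (i : Fin 2) : pd i 1 = 0 := pderiv_one

lemma pd_X_self (i : Fin 2) : pd i (X i) = 1 := pderiv_X_self i

lemma pd_zero_X_one : pd 0 (X 1) = 0 := pderiv_X_of_ne (by decide)

lemma pd_one_X_zero : pd 1 (X 0) = 0 := pderiv_X_of_ne (by decide)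

/-- The first transvectant is the Jacobian up to normalization. -/
lemma transv_one (p q : ℕ) (F G : P2) :
    transv p q 1 F G =
      C ((Nat.factorial (p - 1) * Nat.factorial (q - 1) : ℂ)
        / (Nat.factorial p * Nat.factorial q)) * (pd 0 F * pd 1 G - pd 1 F * pd 0 G) := by
  rw [transv]
  congr 1
  simp [Finset.sum_range_succ]
  ring

lemma transv_two (p q : ℕ) (F G : P2) :
    transv p q 2 F G =
      C ((Nat.factorial (p - 2) * Nat.factorial (q - 2) : ℂ)
        / (Nat.factorial p * Nat.factorial q)) *
      (pd 0 (pd 0 F) * pd 1 (pd 1 G) - 2 * pd 1 (pd 0 F) * pd 0 (pd 1 G)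
        + pd 1 (pd 1 F) * pd 0 (pd 0 G)) := by
  rw [transv]
  congr 1
  simp [Finset.sum_range_succ]
  ring

lemma transv_four (p q : ℕ) (F G : P2) :
    transv p q 4 F G =
      C ((Nat.factorial (p - 4) * Nat.factorial (q - 4) : ℂ)
        / (Nat.factorial p * Nat.factorial q)) *
      (pd 0 (pd 0 (pd 0 (pd 0 F))) * pd 1 (pd 1 (pd 1 (pd 1 G)))
        - 4 * pd 1 (pd 0 (pd 0 (pd 0 F))) * pd 0 (pd 1 (pd 1 (pd 1 G)))
        + 6 * pd 1 (pd 1 (pd 0 (pd 0 F))) * pd 0 (pd 0 (pd 1 (pd 1 G)))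
        - 4 * pd 1 (pd 1 (pd 1 (pd 0 F))) * pd 0 (pd 0 (pd 0 (pd 1 G)))
        + pd 1 (pd 1 (pd 1 (pd 1 F))) * pd 0 (pd 0 (pd 0 (pd 0 G)))) := by
  have h : Nat.choose 4 2 = 6 := by decide
  rw [transv]
  congr 1
  simp [Finset.sum_range_succ, h, pow_succ]
  ring

lemma cov1_sylvester (u v w : ℂ) :
    cov1 (sylvester u v w) =
      C 2 * (C (u * v) * X 0 * X 1 - C (u * w) * X 0 * (X 0 + X 1)
        - C (v * w) * X 1 * (X 0 + X 1)) := by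
  simp only [cov1, transv_four, sylvester, pd_add, pd_sub, pd_neg, pd_mul, pd_pow, pd_C,
    pd_X_self, pd_zero_X_one, pd_one_X_zero, mul_zero, zero_mul, add_zero, zero_add, mul_one,
    sub_zero, zero_sub]
  refine MvPolynomial.funext fun a => ?_
  simp [Nat.factorial]
  ring

lemma cov2_sylvester (u v w : ℂ) :
    cov2 (sylvester u v w) = C (6 * u * v * w) * X 0 * X 1 * (X 0 + X 1) := by
  rw [cov2, cov1_sylvester]
  simp only [transv_two, sylvester, pd_add, pd_sub, pd_mul, pd_pow, pd_C,
    pd_X_self, pd_zero_X_one, pd_one_X_zero, mul_zero, zero_mul, add_zero, zero_add, mul_one,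
    sub_zero, zero_sub]
  refine MvPolynomial.funext fun a => ?_
  simp [Nat.factorial]
  ring

lemma cov3_sylvester (u v w : ℂ) :
    cov3 (sylvester u v w) =
      C (-8 * (u * v * w) ^ 2) * (X 0 ^ 2 + X 0 * X 1 + X 1 ^ 2) := by
  rw [cov3, cov2_sylvester]
  simp only [transv_two, pd_add, pd_sub, pd_mul, pd_C,
    pd_X_self, pd_zero_X_one, pd_one_X_zero, mul_zero, zero_mul, add_zero, zero_add, mul_one]
  refine MvPolynomial.funext fun a => ?_
  simp [Nat.factorial]
  ring

lemma cov4_sylvester (u v w : ℂ) :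
    cov4 (sylvester u v w) =
      C (4 * u * v * w) * (C (v * (w - u)) * X 0 + C (u * (w - v)) * X 1) := by
  rw [cov4, cov2_sylvester, cov1_sylvester]
  simp only [transv_two, pd_add, pd_sub, pd_mul, pd_C,
    pd_X_self, pd_zero_X_one, pd_one_X_zero, mul_zero, zero_mul, add_zero, zero_add, mul_one,
    sub_zero, zero_sub]
  refine MvPolynomial.funext fun a => ?_
  simp [Nat.factorial]
  ring

/-- `H = u⁵v⁵w⁵(u − v)(u − w)(v − w)` on the Sylvester canonical form. -/
theorem hinv_sylvester (u v w : ℂ) :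
    Hinv (sylvester u v w)
      = u ^ 5 * v ^ 5 * w ^ 5 * (u - v) * (u - w) * (v - w) := by
  rw [Hinv, cov1_sylvester, cov3_sylvester, cov4_sylvester]
  simp only [transv_one, pow_two, pd_add, pd_sub, pd_mul, pd_C, pd_one,
    pd_X_self, pd_zero_X_one, pd_one_X_zero, mul_zero, zero_mul, add_zero, zero_add, mul_one,
    sub_zero, zero_sub]
  simp [Nat.factorial]
  ring

end
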